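/- arXiv:1209.3342 — 2 statements merged into one kernel-verified Lean document; each statement's English description precedes it below -/
import Mathlib

section
/- Let I be a nonempty set and let f : ℕ → (ℝ ∪ {−∞})^I be eventually periodic with ratio ρ ∈ ℝ, and let π and σ both be periods of f. Then the minimal transient of f with respect to π equals the minimal transient of f with respect to σ. -/
/-- `T` is a transient of `f : ℕ → (ℝ ∪ {−∞})^I` with respect to period `π` and ratio `ρ`:
from index `T` on, `f_i (n + π) = f_i n + π·ρ` for every `i`. -/
def IsTransient {I : Type*} (f : ℕ → I → WithBot ℝ) (π : ℕ) (ρ : ℝ) (T : ℕ) : Prop :=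
  ∀ i : I, ∀ n : ℕ, T ≤ n → f (n + π) i = f n i + (((π : ℝ) * ρ : ℝ) : WithBot ℝ)

theorem IsTransient.iterate {I : Type*} {f : ℕ → I → WithBot ℝ} {π : ℕ} {ρ : ℝ} {T : ℕ}
    (h : IsTransient f π ρ T) (i : I) (n : ℕ) (hn : T ≤ n) (k : ℕ) :
    f (n + k * π) i = f n i + (((k : ℝ) * ((π : ℝ) * ρ) : ℝ) : WithBot ℝ) := by
  induction k with
  | zero => simp
  | succ k ih =>
    have e : n + (k + 1) * π = (n + k * π) + π := by ring
    rw [e, h i _ (by omega), ih, add_assoc, ← WithBot.coe_add]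
    congr 2
    push_cast
    ring

theorem IsTransient.change_period {I : Type*} {f : ℕ → I → WithBot ℝ} {π σ : ℕ} {ρ : ℝ}
    {T S : ℕ} (hπ : 0 < π) (h : IsTransient f π ρ T) (h' : IsTransient f σ ρ S) :
    IsTransient f σ ρ T := by
  intro i n hn
  have h1 := h.iterate i n hn S
  have h2 := h.iterate i (n + σ) (by omega) S
  have h3 := h' i (n + S * π) (by nlinarith)
  rw [show n + S * π + σ = n + σ + S * π by ring, h2, h1, add_right_comm] at h3
  exact (WithBot.add_right_inj WithBot.coe_ne_bot).1 h3

/-- If `π` and `σ` are both periods of an eventually periodic `f` (with ratio `ρ`), then the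
minimal transient of `f` with respect to `π` equals the minimal transient with respect to `σ`. -/
theorem minimal_transient_independent_of_period
    {I : Type*} [Nonempty I] (f : ℕ → I → WithBot ℝ) (ρ : ℝ)
    (π σ : ℕ) (hπ : 0 < π) (hσ : 0 < σ)
    (hfπ : ∃ T, IsTransient f π ρ T) (hfσ : ∃ T, IsTransient f σ ρ T)
    (Tπ Tσ : ℕ)
    (hTπ : IsLeast {T | IsTransient f π ρ T} Tπ)
    (hTσ : IsLeast {T | IsTransient f σ ρ T} Tσ) :
    Tπ = Tσ := by
  exact le_antisymm (hTπ.2 (IsTransient.change_period hσ hTσ.1 hTπ.1))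
    (hTσ.2 (IsTransient.change_period hπ hTπ.1 hTσ.1))
end

section
/- Let S be a nonempty set of positive integers closed under addition and let d = gcd(S). Then: (i) all but finitely many multiples of d belong to S; and (ii) if a₁ ≤ a₂ ≤ … ≤ a_k are elements of S with gcd{a₁,…,a_k} = d, then every multiple n of d with n ≥ (a₁ − d)(a_k − d)/d belongs to S. -/
theorem shorten_list (A : Finset ℕ) (d m : ℕ) (hd : 0 < d) (hm : 0 < m) (hA : ∀ a ∈ A, d ∣ a) :
    ∀ (N : ℕ) (l : List ℕ), l.length = N → (∀ x ∈ l, x ∈ A) →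
      ∃ l' : List ℕ, (∀ x ∈ l', x ∈ A) ∧ l'.length < m ∧ l'.sum ≡ l.sum [MOD d * m] := by
  intro N
  induction N using Nat.strong_induction_on with
  | _ N ih =>
    intro l hl hlA
    by_cases hlt : l.length < m
    · exact ⟨l, hlA, hlt, rfl⟩
    have hpig : ∃ i ∈ Finset.range (l.length + 1), ∃ j ∈ Finset.range (l.length + 1), i ≠ j ∧
        ((l.take i).sum / d) % m = ((l.take j).sum / d) % m := by
      apply Finset.exists_ne_map_eq_of_card_lt_of_maps_to (t := Finset.range m)
      · simp; omega
      · intro i _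
        simpa using Nat.mod_lt _ hm
    have hpig' : ∃ i j, i < j ∧ j ≤ l.length ∧
        ((l.take i).sum / d) % m = ((l.take j).sum / d) % m := by
      obtain ⟨i, hi, j, hj, hne, h⟩ := hpig
      simp only [Finset.mem_range] at hi hj
      rcases lt_or_gt_of_ne hne with h1 | h1
      · exact ⟨i, j, h1, by omega, h⟩
      · exact ⟨j, i, h1, by omega, h.symm⟩
    obtain ⟨i, j, hij, hj, h⟩ := hpig'
    have hdv : ∀ k, d * ((l.take k).sum / d) = (l.take k).sum := by
      intro k
      apply Nat.mul_div_cancel'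
      apply List.dvd_sum
      intro x hx
      exact hA x (hlA x (List.mem_of_mem_take hx))
    have hmod : (l.take i).sum ≡ (l.take j).sum [MOD d * m] := by
      rw [← hdv i, ← hdv j]
      exact Nat.ModEq.mul_left' d h
    obtain ⟨l', h1, h2, h3⟩ := ih (l.take i ++ l.drop j).length
      (by simp only [List.length_append, List.length_take, List.length_drop]; omega) _ rfl (by
        intro x hx
        rcases List.mem_append.1 hx with hx | hx
        · exact hlA x (List.mem_of_mem_take hx)
        · exact hlA x (List.mem_of_mem_drop hx))
    refine ⟨l', h1, h2, h3.trans ?_⟩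
    rw [List.sum_append]
    conv_rhs => rw [← List.sum_take_add_sum_drop l j]
    exact hmod.add_right _


/-- Brauer-type lemma: a nonempty set `S` of positive integers closed under addition contains
all but finitely many multiples of its gcd `d`; moreover, if `A` is a finite gcd-generator of
`S` with minimum `a₁` and maximum `a_k`, then every positive multiple `n` of `d` with
`n ≥ (a₁ − d)(a_k − d)/d` belongs to `S`. -/
theorem semigroup_contains_large_multiples_of_gcd
    (S : Set ℕ) (hne : S.Nonempty) (hpos : ∀ a ∈ S, 0 < a)
    (hadd : ∀ a ∈ S, ∀ b ∈ S, a + b ∈ S)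
    (d : ℕ) (hdvd : ∀ a ∈ S, d ∣ a) (hgr : ∀ e : ℕ, (∀ a ∈ S, e ∣ a) → e ∣ d) :
    {m : ℕ | d ∣ m ∧ m ∉ S}.Finite ∧
    ∀ (A : Finset ℕ) (hA : A.Nonempty), (↑A : Set ℕ) ⊆ S → A.gcd id = d →
      ∀ n : ℕ, 0 < n → d ∣ n →
        (A.min' hA - d) * (A.max' hA - d) ≤ d * n → n ∈ S := by
  obtain ⟨s0, hs0⟩ := hne
  have hd : 0 < d := Nat.pos_of_dvd_of_pos (hdvd s0 hs0) (hpos s0 hs0)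
  have hcl : ∀ n ∈ AddSubmonoid.closure S, n = 0 ∨ n ∈ S := by
    intro n hn
    induction hn using AddSubmonoid.closure_induction with
    | mem x hx => exact Or.inr hx
    | zero => exact Or.inl rfl
    | add x y _ _ hx hy =>
      rcases hx with rfl | hx
      · simpa using hy
      · rcases hy with rfl | hy
        · exact Or.inr hx
        · exact Or.inr (hadd x hx y hy)
  constructor
  · have hg : Nat.setGcd S = d :=
      Nat.dvd_antisymm (hgr _ fun a ha => Nat.setGcd_dvd_of_mem ha) (Nat.dvd_setGcd_iff.2 hdvd)
    obtain ⟨N, hN⟩ := Nat.exists_mem_closure_of_ge S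
    rw [hg] at hN
    refine (Finset.range (N + 1)).finite_toSet.subset ?_
    rintro x ⟨hx1, hx2⟩
    simp only [Finset.coe_range, Set.mem_Iio]
    by_contra hc
    rcases hcl x (hN x (by omega) hx1) with h | h
    · omega
    · exact hx2 h
  · intro A hA hAS hgcd n hn hdn hle
    have hAd : ∀ a ∈ A, d ∣ a := fun a ha => hdvd a (hAS ha)
    have hg : Nat.setGcd (A : Set ℕ) = d := by
      apply Nat.dvd_antisymm
      · rw [← hgcd]
        exact Finset.dvd_gcd fun a ha => Nat.setGcd_dvd_of_mem ha
      · exact Nat.dvd_setGcd_iff.2 hAd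
    obtain ⟨N, hN⟩ := Nat.exists_mem_closure_of_ge (A : Set ℕ)
    rw [hg] at hN
    have ha1 := A.min'_mem hA
    have hb : ∀ a ∈ A, a ≤ A.max' hA := fun a ha => A.le_max' a ha
    have hak := hAd _ (A.max'_mem hA)
    have hminS := hAS ha1
    have hmaxpos := hpos _ (hAS (A.max'_mem hA))
    generalize A.max' hA = b at *
    generalize A.min' hA = a at *
    obtain ⟨m, rfl⟩ := hAd a ha1
    have hm : 0 < m := Nat.pos_of_mul_pos_left (hpos _ hminS)
    have hmem := hN (n + N * (d * m)) (by nlinarith [Nat.mul_pos hd hm])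
      (dvd_add hdn ((dvd_mul_right d m).mul_left N))
    obtain ⟨l, hlA, hls⟩ := AddSubmonoid.exists_list_of_mem_closure hmem
    obtain ⟨l', h1, h2, h3⟩ := shorten_list A d m hd hm hAd _ l rfl hlA
    have hmod : l'.sum ≡ n [MOD d * m] := by
      rw [hls] at h3
      refine h3.trans ?_
      simp [Nat.ModEq]
    have hsum : l'.sum ≤ (m - 1) * b := by
      calc l'.sum ≤ l'.length • b := List.sum_le_card_nsmul _ _ fun x hx => hb x (h1 x hx)
        _ ≤ (m - 1) * b := by
          rw [smul_eq_mul]; exact Nat.mul_le_mul_right _ (by omega)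
    have hbn : (m - 1) * (b - d) ≤ n := by
      have : d * m - d = d * (m - 1) := by rw [Nat.mul_sub, mul_one]
      rw [this, mul_assoc] at hle
      exact Nat.le_of_mul_le_mul_left hle hd
    have hdb : d ≤ b := Nat.le_of_dvd hmaxpos hak
    have hlt : l'.sum < n + d * m := by
      obtain ⟨c, rfl⟩ := Nat.exists_eq_add_of_le hdb
      obtain ⟨k, rfl⟩ := Nat.exists_eq_add_of_le' hm
      simp only [Nat.add_sub_cancel, Nat.add_sub_cancel_left] at hsum hbn
      nlinarith
    have hln : l'.sum ≤ n := by
      by_contra hc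
      have hdvd' := (Nat.modEq_iff_dvd' (by omega)).1 hmod.symm
      have := Nat.le_of_dvd (by omega) hdvd'
      omega
    obtain ⟨t, ht⟩ := (Nat.modEq_iff_dvd' hln).1 hmod
    have hnmem : n ∈ AddSubmonoid.closure S := by
      have : n = l'.sum + t • (d * m) := by rw [smul_eq_mul, mul_comm t]; omega
      rw [this]
      exact add_mem (list_sum_mem fun x hx => AddSubmonoid.subset_closure (hAS (h1 x hx)))
        (nsmul_mem (AddSubmonoid.subset_closure hminS) t)
    rcases hcl n hnmem with h | h
    · omega
    · exact h
end
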